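/- For every permutation w of {1,…,n}, the following identity holds in ℤ[x₁,…,xₙ,y₁,…,yₙ]: the sum over all bumpless-reduced δ ∈ GPDs(w) of the product over all blank tiles at positions (i,j) of δ of (x_i − y_j) equals the sum over all classic pipe dreams γ ∈ GPDs(w₀ w w₀) of the product over all cross tiles at positions (i,j) of γ of (x_{n+1−i} − y_{n+1−j}), where w₀ is the longest permutation. (This expresses the agreement of the classic and bumpless pipe dream formulas for double Schubert polynomials.) -/

import Mathlib

open scoped Classical

namespace GPDpaper

/-- Raw data of a pipe-filling of the `n × n` grid: `d.1 i j` is the (optional) pipe label on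
the vertical edge at row `i`, West of column `j` (so `d.1 i 0` is on the West boundary and
`d.1 i (Fin.last n)` on the East boundary); `d.2 i j` is the label on the horizontal edge
North of row `i` in column `j` (so `d.2 0 j` is on the North boundary and
`d.2 (Fin.last n) j` on the South boundary).  Rows are numbered from the top. -/
abbrev Pipes (n : ℕ) :=
  (Fin n → Fin (n+1) → Option (Fin n)) × (Fin (n+1) → Fin n → Option (Fin n))

variable {n : ℕ}

/-- Label on the West edge of square `(i,j)`. -/
def We (d : Pipes n) (i j : Fin n) : Option (Fin n) := d.1 i j.castSucc
/-- Label on the East edge of square `(i,j)`. -/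
def Ea (d : Pipes n) (i j : Fin n) : Option (Fin n) := d.1 i j.succ
/-- Label on the North edge of square `(i,j)`. -/
def No (d : Pipes n) (i j : Fin n) : Option (Fin n) := d.2 i.castSucc j
/-- Label on the South edge of square `(i,j)`. -/
def So (d : Pipes n) (i j : Fin n) : Option (Fin n) := d.2 i.succ j

/-- The local condition making `d` a generic pipe dream: at each square, the pair of labels
leaving through the East and North edges is either `(W,S)` (cross/horizontal/vertical/blank
tile) or `(S,W)` (bump/elbow/blank tile); moreover two edges of the same square never carry
the same pipe label. -/
def IsValid (d : Pipes n) : Prop :=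
  ∀ i j : Fin n,
    ((Ea d i j, No d i j) = (We d i j, So d i j) ∨
     (Ea d i j, No d i j) = (So d i j, We d i j)) ∧
    (We d i j = So d i j → We d i j = none)

/-- The seven generic pipe dream tiles. -/
inductive Tile where
  | cross | bump | nw | se | horiz | vert | blank
deriving DecidableEq

/-- The tile of a pipe-filling at square `(i,j)`. -/
def tile (d : Pipes n) (i j : Fin n) : Tile :=
  match We d i j, So d i j with
  | some a, some _ => if Ea d i j = some a then .cross else .bump
  | some _, none => if No d i j = none then .horiz else .nw
  | none, some _ => if No d i j = none then .se else .vert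
  | none, none => .blank

/-- `d` is a generic pipe dream for the permutation `w`: it is locally valid, the pipe
entering the West boundary in row `i` is labelled `i`, no pipes meet the East and South
boundaries, and the pipe exiting the North boundary in column `j` is labelled `w⁻¹(j)`. -/
def IsGPDof (w : Equiv.Perm (Fin n)) (d : Pipes n) : Prop :=
  IsValid d ∧
  (∀ i : Fin n, d.1 i 0 = some i) ∧
  (∀ i : Fin n, d.1 i (Fin.last n) = none) ∧
  (∀ j : Fin n, d.2 (Fin.last n) j = none) ∧
  (∀ j : Fin n, d.2 0 j = some (w.symm j))

/-- Number of tiles of `d` of a given type. -/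
noncomputable def tileCount (d : Pipes n) (t : Tile) : ℕ :=
  (Finset.univ.filter (fun p : Fin n × Fin n => tile d p.1 p.2 = t)).card

/-- The pipes labelled `p` and `q` cross at the tile `(i,j)`. -/
def CrossesAt (d : Pipes n) (p q : Fin n) (i j : Fin n) : Prop :=
  tile d i j = .cross ∧
  ((We d i j = some p ∧ So d i j = some q) ∨ (We d i j = some q ∧ So d i j = some p))

/-- The number of tiles at which the pipes labelled `p` and `q` cross. -/
noncomputable def crossCount (d : Pipes n) (p q : Fin n) : ℕ :=
  (Finset.univ.filter (fun ij : Fin n × Fin n => CrossesAt d p q ij.1 ij.2)).card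

/-- No two pipes of `d` cross each other at more than one tile. -/
def NoDoubleCross (d : Pipes n) : Prop := ∀ p q : Fin n, crossCount d p q ≤ 1

/-- Number of inversions (Coxeter length) of a permutation. -/
def invCount (w : Equiv.Perm (Fin n)) : ℕ :=
  (Finset.univ.filter (fun p : Fin n × Fin n => p.1 < p.2 ∧ w p.2 < w p.1)).card

/-- Classic pipe dream (in 1-indexed terms: crosses and bumps for `i+j ≤ n`, NW-elbows on the
antidiagonal `i+j = n+1`, blanks below, and no two pipes crossing twice). -/
def IsClassic (d : Pipes n) : Prop :=
  (∀ i j : Fin n, (i : ℕ) + (j : ℕ) + 2 ≤ n → tile d i j = .cross ∨ tile d i j = .bump) ∧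
  (∀ i j : Fin n, (i : ℕ) + (j : ℕ) + 2 = n + 1 → tile d i j = .nw) ∧
  (∀ i j : Fin n, (i : ℕ) + (j : ℕ) + 2 > n + 1 → tile d i j = .blank) ∧
  NoDoubleCross d

/-- Bumpless-reduced: no bump tiles and no two pipes crossing twice. -/
def IsBumplessReduced (d : Pipes n) : Prop :=
  (∀ i j : Fin n, tile d i j ≠ .bump) ∧ NoDoubleCross d


/-- Variables `x₁,…,xₙ, y₁,…,yₙ`. -/
inductive XY (n : ℕ) where
  | x (i : Fin n) | y (j : Fin n)

/-!
Both sums are partition functions of one square lattice model, with two choices of local weights.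
Label every pipe by the column at which it exits. By a discrete Green's theorem the number of
crossings of two given pipes, counted with orientation, is determined by `w`; hence pipes cross at
most once exactly when, at every cross, the pipe coming from the West carries the larger label,
which is a local rule. The weights then satisfy a Yang-Baxter equation, and moving its intertwiner
through two adjacent rows yields, for either model, the divided difference recursion satisfied by
double Schubert polynomials. Reversing rows and columns matches the two recursions, and at `w₀`,
where there is a unique pipe dream, the two products coincide.
-/

section DiscreteGreen

theorem sum_succ_sub_castSucc {G : Type*} [AddCommGroup G] {m : ℕ} (f : Fin (m + 1) → G) :
    ∑ i : Fin m, (f i.succ - f i.castSucc) = f (Fin.last m) - f 0 := by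
  rw [Finset.sum_sub_distrib, sub_eq_sub_iff_add_eq_add, add_comm _ (f 0), add_comm (f (.last m)),
    ← Fin.sum_univ_succ, ← Fin.sum_univ_castSucc]

theorem sum_circulation {G : Type*} [AddCommGroup G] {k m : ℕ}
    (P : Fin k → Fin (m + 1) → G) (Q : Fin (k + 1) → Fin m → G) :
    ∑ i, ∑ j, (P i j.castSucc + Q i.succ j - Q i.castSucc j - P i j.succ) =
      ∑ i, P i 0 + ∑ j, Q (Fin.last k) j - ∑ j, Q 0 j - ∑ i, P i (Fin.last m) := by
  have hP : ∑ i, ∑ j : Fin m, (P i j.succ - P i j.castSucc) = ∑ i, (P i (Fin.last m) - P i 0) := by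
    simp only [sum_succ_sub_castSucc]
  have hQ : ∑ i : Fin k, ∑ j, (Q i.succ j - Q i.castSucc j) = ∑ j, (Q (Fin.last k) j - Q 0 j) := by
    rw [Finset.sum_comm]
    exact Finset.sum_congr rfl fun j _ => sum_succ_sub_castSucc fun i => Q i j
  simp only [Finset.sum_sub_distrib, Finset.sum_add_distrib] at hP hQ ⊢
  grind

section Height

variable {A : Type*} [AddCommMonoid A] {k m : ℕ} {h : Fin k → Fin (m + 1) → A}
  {v : Fin (k + 1) → Fin m → A}

/-- No flow is created or lost in a cell when `h` is the flow through the vertical edges, entering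
from the West and leaving to the East, and `v` the flow through the horizontal edges, entering from
the South and leaving to the North. -/
def IsConserved (h : Fin k → Fin (m + 1) → A) (v : Fin (k + 1) → Fin m → A) : Prop :=
  ∀ i j, h i j.castSucc + v i.succ j = h i j.succ + v i.castSucc j

/-- The height function of a flow: the total flow through a lattice path from the top left corner of
the grid to the given vertex, here the path going down and then right. -/
def height (h : Fin k → Fin (m + 1) → A) (v : Fin (k + 1) → Fin m → A) (i : Fin (k + 1))
    (j : Fin (m + 1)) : A :=
  Fin.partialSum (fun i => h i 0) i + Fin.partialSum (v i) j

theorem height_right (i : Fin (k + 1)) (j : Fin m) :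
    height h v i j.succ = height h v i j.castSucc + v i j := by
  rw [height, height, Fin.partialSum_succ, add_assoc]

theorem IsConserved.height_down (hc : IsConserved h v) (i : Fin k) (j : Fin (m + 1)) :
    height h v i.succ j = height h v i.castSucc j + h i j := by
  induction j using Fin.induction with
  | zero => simp [height, Fin.partialSum_succ]
  | succ j ih => rw [height_right, height_right, ih, add_assoc, hc i j, add_assoc, add_comm (h i _)]

theorem height_zero_left (j : Fin (m + 1)) : height h v 0 j = Fin.partialSum (v 0) j := by
  simp [height]

theorem height_zero_right (i : Fin (k + 1)) :
    height h v i 0 = Fin.partialSum (fun i => h i 0) i := by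
  simp [height]

end Height

/-- Discrete Green's theorem: the left side sums `d (height h v) ∧ d (height h' v')` over the cells,
the right side integrates `height h v • d (height h' v')` along the boundary. -/
theorem IsConserved.sum_wedge {A : Type*} [CommRing A] {k m : ℕ} {h h' : Fin k → Fin (m + 1) → A}
    {v v' : Fin (k + 1) → Fin m → A} (hc : IsConserved h v) (hc' : IsConserved h' v') :
    ∑ i, ∑ j : Fin m, (h i j.castSucc * v' i.succ j - v i.castSucc j * h' i j.succ) =
      ∑ i, height h v i.castSucc 0 * h' i 0 +
        ∑ j, height h v (Fin.last k) j.castSucc * v' (Fin.last k) j -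
        ∑ j, height h v 0 j.castSucc * v' 0 j -
        ∑ i, height h v i.castSucc (Fin.last m) * h' i (Fin.last m) := by
  rw [← sum_circulation (fun i j => height h v i.castSucc j * h' i j)
    fun i j => height h v i j.castSucc * v' i j]
  refine Finset.sum_congr rfl fun i _ => Finset.sum_congr rfl fun j _ => ?_
  rw [height_right, hc.height_down]
  linear_combination -height h v i.castSucc j.castSucc * hc' i j

end DiscreteGreen

section Crossings

variable {w : Equiv.Perm (Fin n)} {d : Pipes n} {a b : Fin n}

/-- At every cell the labels entering from the West and the South leave to the East and the North.
Unlike `IsValid` this allows both labels to coincide. -/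
def IsRouted (d : Pipes n) : Prop :=
  ∀ i j, (Ea d i j, No d i j) = (We d i j, So d i j) ∨ (Ea d i j, No d i j) = (So d i j, We d i j)

/-- The labels on the West and North boundaries are given by `W` and `N`, and no pipe meets the East
and South boundaries. -/
def HasBoundary (W N : Fin n → Option (Fin n)) (d : Pipes n) : Prop :=
  (∀ i, d.1 i 0 = W i) ∧ (∀ i, d.1 i (Fin.last n) = none) ∧
    (∀ j, d.2 (Fin.last n) j = none) ∧ ∀ j, d.2 0 j = N j

/-- The flow of the pipe labelled `a` through the vertical edges. -/
def vertFlow (d : Pipes n) (a : Fin n) (i : Fin n) (j : Fin (n + 1)) : ℤ :=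
  if d.1 i j = some a then 1 else 0

/-- The flow of the pipe labelled `a` through the horizontal edges. -/
def horizFlow (d : Pipes n) (a : Fin n) (i : Fin (n + 1)) (j : Fin n) : ℤ :=
  if d.2 i j = some a then 1 else 0

theorem IsRouted.isConserved (hd : IsRouted d) (a : Fin n) :
    IsConserved (vertFlow d a) (horizFlow d a) := by
  intro i j
  have := hd i j
  simp only [We, Ea, No, So, Prod.mk.injEq] at this
  simp only [vertFlow, horizFlow]
  grind

theorem partialSum_ite_eq (a : Fin n) (k : Fin (n + 1)) :
    Fin.partialSum (fun i => if i = a then (1 : ℤ) else 0) k = if a.castSucc < k then 1 else 0 := by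
  induction k using Fin.induction with
  | zero => simp
  | succ k ih =>
    rw [Fin.partialSum_succ, ih]
    grind

theorem vertFlow_west (hb : HasBoundary some (fun j => some (w.symm j)) d) (i : Fin n) :
    vertFlow d a i 0 = if i = a then 1 else 0 := by
  simp [vertFlow, hb.1]

theorem horizFlow_north (hb : HasBoundary some (fun j => some (w.symm j)) d) (j : Fin n) :
    horizFlow d a 0 j = if j = w a then 1 else 0 := by
  simp [horizFlow, hb.2.2.2, Equiv.symm_apply_eq]

theorem height_west (hb : HasBoundary some (fun j => some (w.symm j)) d)
    (i : Fin (n + 1)) :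
    height (vertFlow d a) (horizFlow d a) i 0 = if a.castSucc < i then 1 else 0 := by
  simp only [height_zero_right, vertFlow_west hb, partialSum_ite_eq]

theorem height_north (hb : HasBoundary some (fun j => some (w.symm j)) d)
    (j : Fin (n + 1)) :
    height (vertFlow d a) (horizFlow d a) 0 j = if (w a).castSucc < j then 1 else 0 := by
  rw [height_zero_left, funext (horizFlow_north hb), partialSum_ite_eq]

theorem height_south (hb : HasBoundary some (fun j => some (w.symm j)) d)
    (j : Fin (n + 1)) :
    height (vertFlow d a) (horizFlow d a) (Fin.last n) j = 1 := by
  induction j using Fin.induction with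
  | zero => simp [height_west hb, Fin.castSucc_lt_last]
  | succ j ih => simp [height_right, ih, horizFlow, hb.2.2.1]

theorem sum_wedge_flow (hd : IsRouted d)
    (hb : HasBoundary some (fun j => some (w.symm j)) d) (a b : Fin n) :
    ∑ i, ∑ j : Fin n, (vertFlow d a i j.castSucc * horizFlow d b i.succ j -
        horizFlow d a i.castSucc j * vertFlow d b i j.succ) =
      (if a < b then 1 else 0) - if w a < w b then 1 else 0 := by
  have east (i : Fin n) : vertFlow d b i (Fin.last n) = 0 := by simp [vertFlow, hb.2.1]
  have south (j : Fin n) : horizFlow d b (Fin.last n) j = 0 := by simp [horizFlow, hb.2.2.1]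
  rw [(hd.isConserved a).sum_wedge (hd.isConserved b)]
  simp [east, south, height_west hb, height_north hb, vertFlow_west hb, horizFlow_north hb]

/-- A tile met twice by the pipe `a` would raise its height from at least `0` to at least `2`. -/
theorem IsRouted.isValid (hd : IsRouted d)
    (hb : HasBoundary some (fun j => some (w.symm j)) d) : IsValid d := by
  refine fun i j => ⟨hd i j, fun heq => ?_⟩
  by_contra hne
  obtain ⟨a, ha⟩ := Option.ne_none_iff_exists'.mp hne
  have hmono (j) : Monotone fun i => height (vertFlow d a) (horizFlow d a) i j := by
    refine Fin.monotone_iff_le_succ.mpr fun i => ?_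
    rw [(hd.isConserved a).height_down, vertFlow]
    grind
  have hW : vertFlow d a i j.castSucc = 1 := if_pos ha
  have hS : horizFlow d a i.succ j = 1 := if_pos (heq.symm.trans ha)
  have lower : 0 ≤ height (vertFlow d a) (horizFlow d a) i.castSucc j.castSucc := by
    refine le_trans ?_ (hmono j.castSucc (Fin.zero_le i.castSucc))
    simp only [height_north hb]
    positivity
  have upper : height (vertFlow d a) (horizFlow d a) i.succ j.succ ≤ 1 :=
    (hmono j.succ (Fin.le_last i.succ)).trans_eq (height_south hb _)
  rw [height_right, (hd.isConserved a).height_down, hW, hS] at upper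
  linarith

theorem isGPDof_iff : IsGPDof w d ↔
    IsRouted d ∧ HasBoundary some (fun j => some (w.symm j)) d :=
  ⟨fun h => ⟨fun i j => (h.1 i j).1, h.2⟩, fun h => ⟨h.1.isValid h.2, h.2⟩⟩

theorem tile_eq_cross_iff {i j : Fin n} : tile d i j = .cross ↔
    ∃ a b, We d i j = some a ∧ So d i j = some b ∧ Ea d i j = some a := by
  unfold tile
  grind

/-- The number of tiles at which the pipe `a`, coming from the West, crosses the pipe `b`, coming
from the South. -/
noncomputable def orientedCrossCount (d : Pipes n) (a b : Fin n) : ℕ :=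
  (Finset.univ.filter fun p : Fin n × Fin n =>
    tile d p.1 p.2 = .cross ∧ We d p.1 p.2 = some a ∧ So d p.1 p.2 = some b).card

theorem orientedCrossCount_sub_swap (hd : IsGPDof w d) (hab : a ≠ b) :
    (orientedCrossCount d a b : ℤ) - orientedCrossCount d b a =
      (if a < b then 1 else 0) - if w a < w b then 1 else 0 := by
  obtain ⟨hr, hb⟩ := isGPDof_iff.mp hd
  rw [← sum_wedge_flow hr hb]
  simp only [orientedCrossCount, Finset.card_filter, Nat.cast_sum, Nat.cast_ite, Nat.cast_one,
    Nat.cast_zero, ← Finset.sum_sub_distrib, Fintype.sum_prod_type]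
  refine Finset.sum_congr rfl fun i _ => Finset.sum_congr rfl fun j _ => ?_
  have hv := hd.1 i j
  have hcross := tile_eq_cross_iff (d := d) (i := i) (j := j)
  simp only [We, Ea, No, So, Prod.mk.injEq] at hv hcross
  simp only [We, So, vertFlow, horizFlow]
  grind

theorem crossCount_eq_add (hab : a ≠ b) :
    crossCount d a b = orientedCrossCount d a b + orientedCrossCount d b a := by
  rw [crossCount, orientedCrossCount, orientedCrossCount, ← Finset.card_union_of_disjoint]
  · congr 1
    ext p
    simp [CrossesAt, and_or_left]
  · grind [Finset.disjoint_left]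

theorem orientedCrossCount_self (hd : IsValid d) (a : Fin n) : orientedCrossCount d a a = 0 := by
  simp only [orientedCrossCount, Finset.card_eq_zero, Finset.filter_eq_empty_iff]
  rintro ⟨i, j⟩ - ⟨-, hW, hS⟩
  simpa [hW] using (hd i j).2 (hW.trans hS.symm)

theorem crossCount_self (hd : IsValid d) (a : Fin n) : crossCount d a a = 0 := by
  simpa [crossCount, orientedCrossCount, CrossesAt] using orientedCrossCount_self hd a

/-- The two oriented counts differ by an amount depending only on `w`, so two pipes cross at most
once exactly when they never cross in the orientation that `w` does not call for. -/
theorem noDoubleCross_iff (hd : IsGPDof w d) :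
    NoDoubleCross d ↔ ∀ i j a b, tile d i j = .cross → We d i j = some a → So d i j = some b →
      w b < w a := by
  have pos_iff (a b : Fin n) : 0 < orientedCrossCount d a b ↔
      ∃ i j, tile d i j = .cross ∧ We d i j = some a ∧ So d i j = some b := by
    simp [orientedCrossCount, Finset.card_pos, Finset.Nonempty]
  have criterion : (∀ i j a b, tile d i j = .cross → We d i j = some a → So d i j = some b →
      w b < w a) ↔ ∀ a b, 0 < orientedCrossCount d a b → w b < w a := by
    simp only [pos_iff]
    grind
  rw [criterion]
  constructor
  · intro h a b hpos
    have hab : a ≠ b := by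
      rintro rfl
      simp [orientedCrossCount_self hd.1] at hpos
    have hle := h a b
    have hw := w.injective.ne hab
    have := orientedCrossCount_sub_swap hd hab
    rw [crossCount_eq_add hab] at hle
    grind
  · intro h a b
    rcases eq_or_ne a b with rfl | hab
    · simp [crossCount_self hd.1]
    have := orientedCrossCount_sub_swap hd hab
    have := h a b
    have := h b a
    rw [crossCount_eq_add hab]
    grind

end Crossings

section TransferMatrices

open Matrix
open scoped Kronecker

theorem semiconjBy_prod_ofFn {M : Type*} [Monoid M] {P : M} :
    ∀ {m : ℕ} {A B : Fin m → M}, (∀ i, SemiconjBy P (A i) (B i)) →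
      SemiconjBy P (List.ofFn A).prod (List.ofFn B).prod
  | 0, _, _, _ => by simp
  | m + 1, A, B, h => by
    simp only [List.ofFn_succ, List.prod_cons]
    exact (h 0).mul_right (semiconjBy_prod_ofFn fun i => h i.succ)

theorem prod_ofFn_sum {S K : Type*} [Semiring S] [Fintype K] :
    ∀ {m : ℕ} (f : Fin m → K → S),
      (List.ofFn fun i => ∑ k, f i k).prod =
        ∑ u : Fin m → K, (List.ofFn fun i => f i (u i)).prod
  | 0, _ => by simp
  | m + 1, f => by
    rw [← (Fin.consEquiv fun _ => K).sum_comp, Fintype.sum_prod_type]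
    simp [List.ofFn_succ, prod_ofFn_sum, Finset.sum_mul_sum]

theorem prod_ofFn_eq_take_mul_drop_of_covBy {M : Type*} [Monoid M] {m : ℕ} {i j : Fin m}
    (hij : i ⋖ j) (A : Fin m → M) :
    (List.ofFn A).prod =
      ((List.ofFn A).take i).prod * (A i * A j) * ((List.ofFn A).drop (j + 1)).prod := by
  have hj : (j : ℕ) = i + 1 := by simpa [Fin.covBy_iff, eq_comm] using hij
  have hdrop : (List.ofFn A).drop i = A i :: A j :: (List.ofFn A).drop (j + 1) := by
    rw [List.drop_eq_getElem_cons (by simp), ← hj, List.drop_eq_getElem_cons (by simp)]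
    simp
  conv_lhs => rw [← List.prod_take_mul_prod_drop (List.ofFn A) i, hdrop]
  simp only [List.prod_cons, mul_assoc]

theorem prod_ofFn_eq_add_smul_of_covBy {R S : Type*} [CommRing R] [Ring S] [Algebra R S]
    {m : ℕ} {i j : Fin m} (hij : i ⋖ j) {A B C : Fin m → S} {c : R}
    (hB : ∀ k, k ≠ i → k ≠ j → B k = A k) (hC : ∀ k, k ≠ i → k ≠ j → C k = A k)
    (h : A i * A j = B i * B j + c • (C i * C j)) :
    (List.ofFn A).prod = (List.ofFn B).prod + c • (List.ofFn C).prod := by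
  have hj : (j : ℕ) = i + 1 := by simpa [Fin.covBy_iff, eq_comm] using hij
  have outer : ∀ D : Fin m → S, (∀ k, k ≠ i → k ≠ j → D k = A k) →
      (List.ofFn D).take i = (List.ofFn A).take i ∧
        (List.ofFn D).drop (j + 1) = (List.ofFn A).drop (j + 1) := by
    intro D hD
    constructor <;> refine List.ext_getElem (by simp) fun k h₁ _ => ?_ <;>
      simp only [List.length_take, List.length_drop, List.length_ofFn, lt_min_iff] at h₁ <;>
      simpa using hD _ (by grind) (by grind)
  simp only [prod_ofFn_eq_take_mul_drop_of_covBy hij, (outer B hB).1, (outer B hB).2,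
    (outer C hC).1, (outer C hC).2, h, mul_add, add_mul, mul_smul_comm, smul_mul_assoc]

variable {R : Type*} [CommRing R] {X : Type*} [Fintype X] [DecidableEq X]

theorem kronecker_prod_ofFn :
    ∀ {m : ℕ} (A B : Fin m → Matrix X X R),
      (List.ofFn A).prod ⊗ₖ (List.ofFn B).prod = (List.ofFn fun i => A i ⊗ₖ B i).prod
  | 0, _, _ => by simp
  | m + 1, A, B => by
    simp only [List.ofFn_succ, List.prod_cons, mul_kronecker_mul, kronecker_prod_ofFn]

theorem matrix_prod_ofFn_apply :
    ∀ {m : ℕ} (A : Fin m → Matrix X X R) (a b : X),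
      (List.ofFn A).prod a b = ∑ u : Fin (m + 1) → X,
        if u 0 = a ∧ u (Fin.last m) = b then ∏ i, A i (u i.castSucc) (u i.succ) else 0
  | 0, A, a, b => by
    rw [← (Equiv.funUnique (Fin 1) X).symm.sum_comp]
    simp [Matrix.one_apply, ite_and]
  | m + 1, A, a, b => by
    rw [← (Fin.consEquiv fun _ => X).sum_comp, Fintype.sum_prod_type]
    simp_rw [List.ofFn_succ, List.prod_cons, Matrix.mul_apply, matrix_prod_ofFn_apply,
      Finset.mul_sum]
    rw [Finset.sum_comm]
    simp [Fin.prod_univ_succ, ite_and]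

section RowMatrix

variable {m : ℕ} (ω ω' : Fin m → X → X → X → X → R)

/-- The linear map across a single tile, from its West label to its East label, once the South and
North labels `S` and `N` are fixed. Weights take their labels in the order West, South, East,
North. -/
def colMatrix (ω : X → X → X → X → R) (S N : X) : Matrix X X R :=
  of fun W E => ω W S E N

/-- The transfer matrix of a row of tiles, from its North labels to its South labels, once the
labels `W` and `E` at its West and East ends are fixed. -/
def rowMatrix (W E : X) : Matrix (Fin m → X) (Fin m → X) R :=
  of fun N S => (List.ofFn fun j => colMatrix (ω j) (S j) (N j)).prod W E

/-- The linear map across a column of two tiles, from the West labels to the East labels, with `ω`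
the weight of the upper tile and `ω'` that of the lower one. -/
def twoRowMatrix (ω ω' : X → X → X → X → R) (S N : X) : Matrix (X × X) (X × X) R :=
  ∑ k, colMatrix ω k N ⊗ₖ colMatrix ω' S k

theorem rowMatrix_mul_rowMatrix_apply (p q e e' : X) (N S : Fin m → X) :
    (rowMatrix ω p e * rowMatrix ω' q e') N S =
      (List.ofFn fun j => twoRowMatrix (ω j) (ω' j) (S j) (N j)).prod (p, q) (e, e') := by
  simp only [twoRowMatrix, prod_ofFn_sum, Matrix.sum_apply, ← kronecker_prod_ofFn,
    kroneckerMap_apply, Matrix.mul_apply, rowMatrix, of_apply]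

/-- The intertwiner of two adjacent rows: it adds to a pair of West labels `g` times the swapped
pair. -/
def rMatrix (g : X → X → R) : Matrix (X × X) (X × X) R :=
  1 + of fun s t => if t = s.swap then g s.1 s.2 else 0

/-- Yang-Baxter equation: the intertwiner `rMatrix g` moves through a column of two tiles,
exchanging their weights `ω` and `ω'`. -/
def YangBaxter (g : X → X → R) (ω ω' : X → X → X → X → R) : Prop :=
  ∀ S N, SemiconjBy (rMatrix g) (twoRowMatrix ω ω' S N) (twoRowMatrix ω' ω S N)

theorem rMatrix_mulVec (g : X → X → R) (V : X × X → R) (p q : X) :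
    (rMatrix g *ᵥ V) (p, q) = V (p, q) + g p q * V (q, p) := by
  rw [rMatrix, add_mulVec, one_mulVec]
  simp [mulVec, dotProduct]

theorem rMatrix_mul_apply (g : X → X → R) (M : Matrix (X × X) (X × X) R) (p q : X) (t : X × X) :
    (rMatrix g * M) (p, q) t = M (p, q) t + g p q * M (q, p) t :=
  rMatrix_mulVec g (fun s => M s t) p q

theorem mul_rMatrix_apply_diag {g : X → X → R} {e : X} (he : g e e = 0)
    (M : Matrix (X × X) (X × X) R) (s : X × X) :
    (M * rMatrix g) s (e, e) = M s (e, e) := by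
  have hcol (t : X × X) : (if (e, e) = t.swap then g t.1 t.2 else 0) = 0 := by grind
  rw [rMatrix, mul_add, mul_one]
  simp [Matrix.mul_apply, hcol]

theorem rowMatrix_exchange {g : X → X → R} {e : X} (he : g e e = 0)
    (hYB : ∀ j, YangBaxter g (ω j) (ω' j)) (p q : X) :
    rowMatrix ω' p e * rowMatrix ω q e =
      rowMatrix ω p e * rowMatrix ω' q e + g p q • (rowMatrix ω q e * rowMatrix ω' p e) := by
  ext N S
  have train := semiconjBy_prod_ofFn fun j => hYB j (S j) (N j)
  have entry := congr_fun₂ train.eq (p, q) (e, e)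
  rw [rMatrix_mul_apply, mul_rMatrix_apply_diag he] at entry
  simpa only [Matrix.add_apply, Matrix.smul_apply, smul_eq_mul, rowMatrix_mul_rowMatrix_apply]
    using entry.symm

end RowMatrix

end TransferMatrices

section VertexWeights

open Matrix

variable {R : Type*} [CommRing R] {ι : Type*} [LinearOrder ι]

/-- The weight of a tile through which its West and South labels pass straight, for a weighting `c`
of the tile types. The label crossing from the South must be the smaller one: once West labels are
recorded by their exit columns, this says that the two pipes have not crossed before. -/
def straightWeight (c : Tile → R) : Option ι → Option ι → R
  | none, none => c .blank
  | some _, none => c .horiz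
  | none, some _ => c .vert
  | some a, some b => if b < a then c .cross else 0

/-- The weight of a tile at which its West and South labels turn. The blank tile is already counted
by `straightWeight`. -/
def turnWeight (c : Tile → R) : Option ι → Option ι → R
  | none, none => 0
  | some _, none => c .nw
  | none, some _ => c .se
  | some _, some _ => c .bump

/-- The weight of a tile with labels `W`, `S`, `E`, `N` on its edges. -/
def vertexWeight (c : Tile → R) (W S E N : Option ι) : R :=
  (if E = W ∧ N = S then straightWeight c W S else 0) +
    (if E = S ∧ N = W then turnWeight c W S else 0)

theorem twoRowMatrix_vertexWeight_mulVec [Fintype ι] (c c' : Tile → R) (p q S N : Option ι)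
    (V : Option ι × Option ι → R) :
    (twoRowMatrix (vertexWeight c) (vertexWeight c') S N *ᵥ V) (p, q) =
      ((if N = S then straightWeight c p S * straightWeight c' q S * V (p, q) else 0) +
          if N = p then turnWeight c p S * straightWeight c' q S * V (S, q) else 0) +
        ((if N = q then straightWeight c p q * turnWeight c' q S * V (p, S) else 0) +
          if N = p then turnWeight c p q * turnWeight c' q S * V (q, S) else 0) := by
  simp [twoRowMatrix, colMatrix, vertexWeight, mulVec, dotProduct, Matrix.sum_apply,
    Fintype.sum_prod_type, add_mul, mul_add, Finset.sum_add_distrib, ite_and]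

/-- Blank tiles weigh `u` and bumps are forbidden. -/
def bumplessWeight (u : R) : Tile → R
  | .blank => u
  | .bump => 0
  | _ => 1

/-- Crosses weigh `u`, and the tiles that do not occur in a classic pipe dream are forbidden. -/
def classicWeight (u : R) : Tile → R
  | .cross => u
  | .bump | .nw | .blank => 1
  | _ => 0

/-- Only the coincidences and the order relations among the four outer labels matter, so the
identity is a finite check. -/
theorem yangBaxter_bumplessWeight [Fintype ι] (x x' y : R) :
    YangBaxter (fun p q : Option ι => if q < p then x - x' else 0)
      (vertexWeight (bumplessWeight (x - y))) (vertexWeight (bumplessWeight (x' - y))) := by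
  intro S N
  refine Matrix.ext_iff_mulVec.mpr fun V => funext fun ⟨p, q⟩ => ?_
  simp only [← mulVec_mulVec, rMatrix_mulVec, twoRowMatrix_vertexWeight_mulVec]
  rcases p with _ | p <;> rcases q with _ | q <;> rcases S with _ | S <;> rcases N with _ | N <;>
    simp only [straightWeight, turnWeight, bumplessWeight, reduceCtorEq, Option.some.injEq,
      Option.not_lt_none, Option.none_lt_some, Option.some_lt_some, if_true, if_false] <;>
    first | ring1 | (split_ifs <;> first | ring1 | (exfalso; order))

theorem yangBaxter_classicWeight [Fintype ι] (x x' y : R) :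
    YangBaxter (fun p q : Option ι => if q ≠ none ∧ q < p then x' - x else 0)
      (vertexWeight (classicWeight (x - y))) (vertexWeight (classicWeight (x' - y))) := by
  intro S N
  refine Matrix.ext_iff_mulVec.mpr fun V => funext fun ⟨p, q⟩ => ?_
  simp only [← mulVec_mulVec, rMatrix_mulVec, twoRowMatrix_vertexWeight_mulVec]
  rcases p with _ | p <;> rcases q with _ | q <;> rcases S with _ | S <;> rcases N with _ | N <;>
    simp only [straightWeight, turnWeight, classicWeight, reduceCtorEq, Option.some.injEq, ne_eq,
      not_true_eq_false, not_false_eq_true, true_and, false_and,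
      Option.not_lt_none, Option.none_lt_some, Option.some_lt_some, if_true, if_false] <;>
    first | ring1 | (split_ifs <;> first | ring1 | (exfalso; order))

end VertexWeights

section PartitionFunction

variable {R : Type*} [CommRing R]

/-- The partition function of the `n × n` grid whose West labels are `w`, whose North labels are the
column indices, and whose East and South boundaries are empty; the cell `(i, j)` is weighted by
`c i j`. Each pipe thus carries the column at which it exits, so that the weights depend on `w` only
through the boundary. -/
noncomputable def partitionFunction (c : Fin n → Fin n → Tile → R) (w : Equiv.Perm (Fin n)) : R :=
  (List.ofFn fun i => rowMatrix (fun j => vertexWeight (c i j)) (some (w i)) none).prod some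
    fun _ => none

theorem partitionFunction_comp_swap {c : Fin n → Fin n → Tile → R} {i j : Fin n} (hij : i ⋖ j)
    {g : Option (Fin n) → Option (Fin n) → R} (hg : g none none = 0)
    (hYB : ∀ k, YangBaxter g (vertexWeight (c i k)) (vertexWeight (c j k)))
    (w : Equiv.Perm (Fin n)) :
    partitionFunction (c ∘ Equiv.swap i j) w =
      partitionFunction c w +
        g (some (w i)) (some (w j)) * partitionFunction c (w * Equiv.swap i j) := by
  have exchange := rowMatrix_exchange (fun k => vertexWeight (c i k))
    (fun k => vertexWeight (c j k)) hg hYB (some (w i)) (some (w j))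
  have hprod := prod_ofFn_eq_add_smul_of_covBy hij
    (A := fun r => rowMatrix (fun k => vertexWeight ((c ∘ Equiv.swap i j) r k)) (some (w r)) none)
    (B := fun r => rowMatrix (fun k => vertexWeight (c r k)) (some (w r)) none)
    (C := fun r => rowMatrix (fun k => vertexWeight (c r k)) (some ((w * Equiv.swap i j) r)) none)
    (fun r hi hj => by simp [Equiv.swap_apply_of_ne_of_ne hi hj])
    (fun r hi hj => by simp [Equiv.swap_apply_of_ne_of_ne hi hj])
    (by simpa using exchange)
  simpa [partitionFunction] using congr_fun₂ hprod some fun _ => none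

theorem rowMatrix_apply {X : Type*} [Fintype X] [DecidableEq X] {m : ℕ}
    (ω : Fin m → X → X → X → X → R) (W E : X) (N S : Fin m → X) :
    rowMatrix ω W E N S = ∑ h : Fin (m + 1) → X,
      if h 0 = W ∧ h (Fin.last m) = E then
        ∏ j, ω j (h j.castSucc) (S j) (h j.succ) (N j) else 0 :=
  matrix_prod_ofFn_apply _ _ _

theorem partitionFunction_eq_sum (c : Fin n → Fin n → Tile → R) (w : Equiv.Perm (Fin n)) :
    partitionFunction c w =
      ∑ d : Pipes n with HasBoundary (fun i => some (w i)) some d,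
        ∏ i, ∏ j, vertexWeight (c i j) (We d i j) (So d i j) (Ea d i j) (No d i j) := by
  rw [partitionFunction, matrix_prod_ofFn_apply, Finset.sum_filter, Fintype.sum_prod_type,
    Finset.sum_comm]
  refine Finset.sum_congr rfl fun v _ => ?_
  simp only [rowMatrix_apply, Fintype.prod_sum, Finset.prod_ite_zero]
  by_cases hv : v 0 = some ∧ v (Fin.last n) = fun _ => none
  · simp [HasBoundary, We, So, Ea, No, hv, forall_and]
  · rw [if_neg hv]
    refine (Finset.sum_eq_zero fun h _ => if_neg fun hb => hv ⟨funext ?_, funext ?_⟩).symm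
    exacts [hb.2.2.2, hb.2.2.1]

variable {w : Equiv.Perm (Fin n)} {d : Pipes n}

/-- The pipe filling in which each label `a` is replaced by `w a`. -/
def relabel (w : Equiv.Perm (Fin n)) : Pipes n ≃ Pipes n :=
  (Equiv.arrowCongr (.refl _) (.arrowCongr (.refl _) w.optionCongr)).prodCongr
    (Equiv.arrowCongr (.refl _) (.arrowCongr (.refl _) w.optionCongr))

theorem hasBoundary_relabel :
    HasBoundary (fun i => some (w i)) some (relabel w d) ↔
      HasBoundary some (fun j => some (w.symm j)) d := by
  have north (x : Option (Fin n)) (j : Fin n) : x.map w = some j ↔ x = some (w.symm j) := by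
    rcases x with _ | a <;> simp [Equiv.eq_symm_apply]
  simp [HasBoundary, relabel, -Option.map_eq_some_iff, north]

theorem vertexWeight_relabel_eq_zero (c : Tile → R) {i j : Fin n}
    (h : ¬ ((Ea d i j, No d i j) = (We d i j, So d i j) ∨
      (Ea d i j, No d i j) = (So d i j, We d i j))) :
    vertexWeight c (We (relabel w d) i j) (So (relabel w d) i j) (Ea (relabel w d) i j)
      (No (relabel w d) i j) = 0 := by
  have hinj := Option.map_injective w.injective
  simp only [Prod.mk.injEq, not_or, We, So, Ea, No] at h
  simp [vertexWeight, relabel, We, So, Ea, No, hinj.eq_iff, h]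

theorem vertexWeight_relabel (hd : IsValid d) (c : Tile → R) (i j : Fin n) :
    vertexWeight c (We (relabel w d) i j) (So (relabel w d) i j) (Ea (relabel w d) i j)
        (No (relabel w d) i j) =
      if ∀ a b, tile d i j = .cross → We d i j = some a → So d i j = some b → w b < w a then
        c (tile d i j) else 0 := by
  have hij := hd i j
  have hinj (a b : Fin n) : w a = w b ↔ a = b := w.apply_eq_iff_eq
  change vertexWeight c ((We d i j).map w) ((So d i j).map w) ((Ea d i j).map w)
    ((No d i j).map w) = _
  unfold tile
  generalize We d i j = W, So d i j = S, Ea d i j = E, No d i j = N at hij ⊢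
  simp only [Prod.mk.injEq] at hij
  obtain ⟨⟨rfl, rfl⟩ | ⟨rfl, rfl⟩, hne⟩ := hij <;> rcases E with _ | a <;> rcases N with _ | b <;>
    simp only [Option.map_some, Option.map_none] <;>
    grind [vertexWeight, straightWeight, turnWeight]

theorem partitionFunction_eq_sum_isGPDof (c : Fin n → Fin n → Tile → R)
    (w : Equiv.Perm (Fin n)) :
    partitionFunction c w =
      ∑ d : Pipes n with IsGPDof w d ∧ NoDoubleCross d, ∏ i, ∏ j, c i j (tile d i j) := by
  rw [partitionFunction_eq_sum, Finset.sum_filter, Finset.sum_filter, ← (relabel w).sum_comp]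
  refine Finset.sum_congr rfl fun d _ => ?_
  by_cases hb : HasBoundary some (fun j => some (w.symm j)) d
  swap
  · rw [if_neg (mt hasBoundary_relabel.mp hb), if_neg fun h => hb h.1.2]
  rw [if_pos (hasBoundary_relabel.mpr hb)]
  by_cases hr : IsRouted d
  · have hd : IsGPDof w d := isGPDof_iff.mpr ⟨hr, hb⟩
    simp only [vertexWeight_relabel hd.1, Finset.prod_ite_zero, Finset.mem_univ, true_imp_iff,
      noDoubleCross_iff hd, hd, true_and]
  · rw [if_neg fun h => hr (isGPDof_iff.mp h.1).1]
    simp only [IsRouted, not_forall] at hr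
    obtain ⟨i, j, hij⟩ := hr
    exact Finset.prod_eq_zero (Finset.mem_univ i)
      (Finset.prod_eq_zero (Finset.mem_univ j) (vertexWeight_relabel_eq_zero _ hij))

end PartitionFunction

section PipeDreamSums

variable {R : Type*} [CommRing R] {w : Equiv.Perm (Fin n)} {d : Pipes n}

/-- The bumpless pipe dream formula for the double Schubert polynomial of `w`, evaluated at
`x` and `y`. -/
noncomputable def bumplessSum (x y : Fin n → R) (w : Equiv.Perm (Fin n)) : R :=
  ∑ d : Pipes n with IsGPDof w d ∧ IsBumplessReduced d,
    ∏ p : Fin n × Fin n with tile d p.1 p.2 = .blank, (x p.1 - y p.2)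

/-- The classic pipe dream formula for the double Schubert polynomial of `w`, evaluated at
`x` and `y`. -/
noncomputable def classicSum (x y : Fin n → R) (w : Equiv.Perm (Fin n)) : R :=
  ∑ d : Pipes n with IsGPDof w d ∧ IsClassic d,
    ∏ p : Fin n × Fin n with tile d p.1 p.2 = .cross, (x p.1 - y p.2)

theorem map_bumplessSum {S : Type*} [CommRing S] (f : R →+* S) (x y : Fin n → R)
    (w : Equiv.Perm (Fin n)) : f (bumplessSum x y w) = bumplessSum (f ∘ x) (f ∘ y) w := by
  simp [bumplessSum]

theorem map_classicSum {S : Type*} [CommRing S] (f : R →+* S) (x y : Fin n → R)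
    (w : Equiv.Perm (Fin n)) : f (classicSum x y w) = classicSum (f ∘ x) (f ∘ y) w := by
  simp [classicSum]

theorem partitionFunction_bumplessWeight (x y : Fin n → R) (w : Equiv.Perm (Fin n)) :
    partitionFunction (fun i j => bumplessWeight (x i - y j)) w = bumplessSum x y w := by
  have weight_eq (u : R) (t : Tile) :
      bumplessWeight u t = if t ≠ .bump then (if t = .blank then u else 1) else 0 := by
    cases t <;> rfl
  rw [partitionFunction_eq_sum_isGPDof, bumplessSum, Finset.sum_filter, Finset.sum_filter]
  refine Finset.sum_congr rfl fun d _ => ?_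
  simp only [weight_eq, Finset.prod_ite_zero, Finset.mem_univ, true_imp_iff, Finset.prod_filter,
    Fintype.prod_prod_type, IsBumplessReduced]
  grind

/-- Only tile types occurring in classic pipe dreams are used. -/
def UsesClassicTiles (d : Pipes n) : Prop :=
  ∀ i j, tile d i j ≠ .horiz ∧ tile d i j ≠ .vert ∧ tile d i j ≠ .se

theorem UsesClassicTiles.isSome_iff (ht : UsesClassicTiles d) (hd : IsValid d) (i j : Fin n) :
    ((We d i j).isSome ↔ (No d i j).isSome) ∧ ((Ea d i j).isSome ↔ (So d i j).isSome) := by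
  have hij := hd i j
  have htile := ht i j
  unfold tile at htile
  grind

theorem UsesClassicTiles.isSome_vert_iff (ht : UsesClassicTiles d) (hd : IsGPDof w d)
    (i : Fin (n + 1)) (j : Fin n) : (d.2 i j).isSome ↔ (i : ℕ) + j < n := by
  obtain ⟨hv, -, hE, -, hN⟩ := hd
  induction i using Fin.induction generalizing j with
  | zero => simp [hN]
  | succ i ih =>
    have hS : (d.2 i.succ j).isSome ↔ (d.1 i j.succ).isSome := (ht.isSome_iff hv i j).2.symm
    rw [hS]
    rcases Fin.eq_castSucc_or_eq_last j.succ with ⟨k, hk⟩ | hlast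
    · have hW : (d.1 i k.castSucc).isSome ↔ (d.2 i.castSucc k).isSome := (ht.isSome_iff hv i k).1
      rw [hk, hW, ih]
      grind
    · rw [hlast, hE]
      grind

theorem UsesClassicTiles.isSome_horiz_iff (ht : UsesClassicTiles d) (hd : IsGPDof w d)
    (i j : Fin n) : (We d i j).isSome ↔ (i : ℕ) + j < n :=
  (ht.isSome_iff hd.1 i j).1.trans (ht.isSome_vert_iff hd i.castSucc j)

theorem isClassic_iff (hd : IsGPDof w d) : IsClassic d ↔ NoDoubleCross d ∧ UsesClassicTiles d := by
  constructor
  · rintro ⟨hlow, hdiag, hhigh, hc⟩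
    refine ⟨hc, fun i j => ?_⟩
    have := hlow i j
    have := hdiag i j
    have := hhigh i j
    grind
  · rintro ⟨hc, ht⟩
    refine ⟨fun i j hij => ?_, fun i j hij => ?_, fun i j hij => ?_, hc⟩ <;>
    · have hW := ht.isSome_horiz_iff hd i j
      have hS : (So d i j).isSome ↔ _ := ht.isSome_vert_iff hd i.succ j
      have htile := ht i j
      rw [Fin.val_succ] at hS
      unfold tile at htile ⊢
      grind

theorem partitionFunction_classicWeight (x y : Fin n → R) (w : Equiv.Perm (Fin n)) :
    partitionFunction (fun i j => classicWeight (x i - y j)) w = classicSum x y w := by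
  have weight_eq (u : R) (t : Tile) : classicWeight u t =
      if t ≠ .horiz ∧ t ≠ .vert ∧ t ≠ .se then (if t = .cross then u else 1) else 0 := by
    cases t <;> rfl
  rw [partitionFunction_eq_sum_isGPDof, classicSum, Finset.sum_filter, Finset.sum_filter]
  refine Finset.sum_congr rfl fun d _ => ?_
  by_cases hd : IsGPDof w d
  · simp only [weight_eq, Finset.prod_ite_zero, Finset.mem_univ, true_imp_iff, Finset.prod_filter,
      Fintype.prod_prod_type, isClassic_iff hd, UsesClassicTiles]
    grind
  · simp [hd]

end PipeDreamSums

section LongestPermutation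

variable {d : Pipes n}

/-- The pipe filling for `w₀`, in which the pipe from row `i` runs straight East until it turns
North at the antidiagonal. -/
def longestPipes (n : ℕ) : Pipes n :=
  (fun i j => if (i : ℕ) + j < n then some i else none,
    fun i j => if (i : ℕ) + j < n then some j.rev else none)

theorem IsGPDof.horiz_eq_of_vert_eq {w : Equiv.Perm (Fin n)} (hd : IsGPDof w d) {i : Fin n}
    (hN : ∀ j, d.2 i.castSucc j = (longestPipes n).2 i.castSucc j) (j : Fin (n + 1)) :
    d.1 i j = (longestPipes n).1 i j := by
  obtain ⟨hv, hW, hE, -, -⟩ := hd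
  have until_turn (j : Fin (n + 1)) : (i : ℕ) + j < n → d.1 i j = some i := by
    induction j using Fin.induction with
    | zero => exact fun _ => hW i
    | succ j ih => grind [hv i j, hN j, We, So, Ea, No, longestPipes, Fin.ext_iff]
  have after_turn (j : Fin (n + 1)) : n ≤ (i : ℕ) + j → d.1 i j = none := by
    induction j using Fin.reverseInduction with
    | last => exact fun _ => hE i
    | cast j ih => grind [hv i j, hN j, We, So, Ea, No, longestPipes]
  grind [longestPipes]

theorem isGPDof_revPerm_iff : IsGPDof Fin.revPerm d ↔ d = longestPipes n := by
  constructor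
  · intro hd
    have vert_eq (i : Fin (n + 1)) (j : Fin n) : d.2 i j = (longestPipes n).2 i j := by
      induction i using Fin.induction generalizing j with
      | zero => simp [hd.2.2.2.2, longestPipes]
      | succ i ih =>
        have hh := hd.horiz_eq_of_vert_eq ih
        grind [hd.1 i j, hh j.castSucc, hh j.succ, ih j, We, So, Ea, No, longestPipes]
    exact Prod.ext (funext₂ fun i => hd.horiz_eq_of_vert_eq (vert_eq i.castSucc)) (funext₂ vert_eq)
  · rintro rfl
    exact ⟨fun i j => by grind [We, So, Ea, No, longestPipes], by simp [longestPipes]⟩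

theorem tile_longestPipes (i j : Fin n) : tile (longestPipes n) i j =
    if (i : ℕ) + j + 2 ≤ n then .cross else if (i : ℕ) + j + 2 = n + 1 then .nw else .blank := by
  grind [tile, We, So, Ea, No, longestPipes]

theorem noDoubleCross_longestPipes : NoDoubleCross (longestPipes n) := by
  rw [noDoubleCross_iff (isGPDof_revPerm_iff.mpr rfl)]
  intro i j a b ht ha hb
  grind [We, So, longestPipes, Fin.revPerm_apply, Fin.lt_def, tile_longestPipes]

theorem partitionFunction_revPerm {R : Type*} [CommRing R] (c : Fin n → Fin n → Tile → R) :
    partitionFunction c Fin.revPerm = ∏ i, ∏ j, c i j (tile (longestPipes n) i j) := by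
  have unique : ({d : Pipes n | IsGPDof Fin.revPerm d ∧ NoDoubleCross d} : Finset (Pipes n)) =
      {longestPipes n} := by
    ext d
    simp +contextual [isGPDof_revPerm_iff, noDoubleCross_longestPipes]
  rw [partitionFunction_eq_sum_isGPDof, unique, Finset.sum_singleton]

end LongestPermutation

section AscentInduction

theorem eq_revPerm_of_strictAnti {w : Equiv.Perm (Fin n)} (hw : StrictAnti w) :
    w = Fin.revPerm :=
  DFunLike.coe_injective <| (hw.range_inj Fin.rev_strictAnti).mp <|
    w.surjective.range_eq.trans Fin.rev_surjective.range_eq.symm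

theorem perm_ascent_induction {P : Equiv.Perm (Fin n) → Prop} (longest : P Fin.revPerm)
    (ascent : ∀ w i j, i ⋖ j → w i < w j → P (w * Equiv.swap i j) → P w)
    (w : Equiv.Perm (Fin n)) : P w := by
  induction hf : toColex ⇑w using WellFoundedLT.induction generalizing w with
  | ind f ih =>
    subst hf
    by_cases hw : ∃ i j, i ⋖ j ∧ w i < w j
    · obtain ⟨i, j, hij, hlt⟩ := hw
      exact ascent w i j hij hlt (ih _ (Pi.colex_asc hij.le hlt) _ rfl)
    · push Not at hw
      have anti : StrictAnti w := (strictAnti_iff_forall_covBy w).mpr fun i j hij =>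
        (hw i j hij).lt_of_ne (w.injective.ne hij.ne')
      rwa [eq_revPerm_of_strictAnti anti]

end AscentInduction

section Agreement

variable {R : Type*} [CommRing R] {i j : Fin n} (x y : Fin n → R) (w : Equiv.Perm (Fin n))

theorem bumplessSum_comp_swap (hij : i ⋖ j) :
    bumplessSum (x ∘ Equiv.swap i j) y w = bumplessSum x y w +
      (if w j < w i then x i - x j else 0) * bumplessSum x y (w * Equiv.swap i j) := by
  simpa [partitionFunction_bumplessWeight, Function.comp_def] using
    partitionFunction_comp_swap (c := fun i k => bumplessWeight (x i - y k)) hij (by simp)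
      (fun k => yangBaxter_bumplessWeight (x i) (x j) (y k)) w

theorem classicSum_comp_swap (hij : i ⋖ j) :
    classicSum (x ∘ Equiv.swap i j) y w = classicSum x y w +
      (if w j < w i then x j - x i else 0) * classicSum x y (w * Equiv.swap i j) := by
  simpa [partitionFunction_classicWeight, Function.comp_def] using
    partitionFunction_comp_swap (c := fun i k => classicWeight (x i - y k)) hij (by simp)
      (fun k => yangBaxter_classicWeight (x i) (x j) (y k)) w

theorem bumplessSum_revPerm : bumplessSum x y Fin.revPerm =
    ∏ i : Fin n, ∏ j : Fin n, if n ≤ (i : ℕ) + j then x i - y j else 1 := by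
  rw [← partitionFunction_bumplessWeight, partitionFunction_revPerm]
  refine Finset.prod_congr rfl fun i _ => Finset.prod_congr rfl fun j _ => ?_
  grind [tile_longestPipes, bumplessWeight]

theorem classicSum_revPerm : classicSum x y Fin.revPerm =
    ∏ i : Fin n, ∏ j : Fin n, if (i : ℕ) + j + 2 ≤ n then x i - y j else 1 := by
  rw [← partitionFunction_classicWeight, partitionFunction_revPerm]
  refine Finset.prod_congr rfl fun i _ => Finset.prod_congr rfl fun j _ => ?_
  grind [tile_longestPipes, classicWeight]

theorem bumplessSum_revPerm_eq_classicSum :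
    bumplessSum x y Fin.revPerm = classicSum (x ∘ Fin.rev) (y ∘ Fin.rev) Fin.revPerm := by
  rw [bumplessSum_revPerm, classicSum_revPerm, ← Equiv.prod_comp Fin.revPerm]
  refine Finset.prod_congr rfl fun i _ => ?_
  rw [← Equiv.prod_comp Fin.revPerm]
  refine Finset.prod_congr rfl fun j _ => ?_
  grind [Fin.revPerm_apply]

theorem revPerm_mul_revPerm : (Fin.revPerm : Equiv.Perm (Fin n)) * Fin.revPerm = 1 :=
  Equiv.ext Fin.rev_rev

theorem swap_rev_rev (i j : Fin n) :
    Equiv.swap j.rev i.rev = Fin.revPerm * Equiv.swap i j * Fin.revPerm := by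
  rw [Equiv.swap_comm]
  exact Equiv.swap_apply_apply Fin.revPerm i j

variable {x}

theorem bumplessSum_eq_classicSum_of_injective [IsDomain R] (hx : Function.Injective x) :
    bumplessSum x y w =
      classicSum (x ∘ Fin.rev) (y ∘ Fin.rev) (Fin.revPerm * w * Fin.revPerm) := by
  induction w using perm_ascent_induction generalizing x with
  | longest =>
    rw [mul_assoc, revPerm_mul_revPerm, mul_one, bumplessSum_revPerm_eq_classicSum]
  | ascent w i j hij hlt ih =>
    have rev_covBy : j.rev ⋖ i.rev := (apply_covBy_apply_iff Fin.revOrderIso).mpr hij.toDual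
    have rev_comp : (x ∘ Fin.rev) ∘ Equiv.swap j.rev i.rev = (x ∘ Equiv.swap i j) ∘ Fin.rev := by
      ext k
      simp [swap_rev_rev]
    have rev_conj : Fin.revPerm * (w * Equiv.swap i j) * Fin.revPerm * Equiv.swap j.rev i.rev =
        Fin.revPerm * w * Fin.revPerm := by
      grind [swap_rev_rev, revPerm_mul_revPerm, Equiv.swap_mul_self]
    have bumpless := bumplessSum_comp_swap x y (w * Equiv.swap i j) hij
    have classic := classicSum_comp_swap (x ∘ Fin.rev) (y ∘ Fin.rev)
      (Fin.revPerm * (w * Equiv.swap i j) * Fin.revPerm) rev_covBy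
    have hne : x i - x j ≠ 0 := sub_ne_zero.mpr (hx.ne hij.ne)
    rw [rev_comp, rev_conj, ← ih hx, ← ih (hx.comp (Equiv.injective _)), bumpless] at classic
    simpa [hlt, mul_assoc, hne] using classic

end Agreement

theorem statement4_general {R : Type*} [CommRing R] (x y : Fin n → R) (w : Equiv.Perm (Fin n)) :
    bumplessSum x y w =
      classicSum (x ∘ Fin.rev) (y ∘ Fin.rev) (Fin.revPerm * w * Fin.revPerm) := by
  let X : Fin n → MvPolynomial (XY n) ℤ := fun i => .X (.x i)
  let Y : Fin n → MvPolynomial (XY n) ℤ := fun j => .X (.y j)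
  let evalXY : MvPolynomial (XY n) ℤ →+* R :=
    MvPolynomial.eval₂Hom (Int.castRingHom R) fun | .x i => x i | .y j => y j
  have hX : Function.Injective X := (MvPolynomial.X_injective).comp fun _ _ => XY.x.inj
  have generic := congrArg evalXY (bumplessSum_eq_classicSum_of_injective Y w hX)
  have hx : evalXY ∘ X = x := by ext i; simp [evalXY, X]
  have hy : evalXY ∘ Y = y := by ext j; simp [evalXY, Y]
  rwa [map_bumplessSum, map_classicSum, ← Function.comp_assoc, ← Function.comp_assoc, hx, hy]
    at generic

theorem statement4 {n : ℕ} (hn : 1 ≤ n) (w : Equiv.Perm (Fin n)) :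
    (∑ d ∈ Finset.univ.filter (fun d : Pipes n => IsGPDof w d ∧ IsBumplessReduced d),
      ∏ p ∈ Finset.univ.filter (fun p : Fin n × Fin n => tile d p.1 p.2 = .blank),
        (MvPolynomial.X (XY.x p.1) - MvPolynomial.X (XY.y p.2) : MvPolynomial (XY n) ℤ)) =
    ∑ g ∈ Finset.univ.filter
        (fun g : Pipes n => IsGPDof (Fin.revPerm * w * Fin.revPerm) g ∧ IsClassic g),
      ∏ p ∈ Finset.univ.filter (fun p : Fin n × Fin n => tile g p.1 p.2 = .cross),
        (MvPolynomial.X (XY.x p.1.rev) - MvPolynomial.X (XY.y p.2.rev)) :=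
  statement4_general (fun i => MvPolynomial.X (R := ℤ) (XY.x i)) (fun j => .X (.y j)) w

end GPDpaper
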